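/- arXiv:0804.0363 — 3 statements merged into one kernel-verified Lean document; each statement's English description precedes it below -/
import Mathlib

section
/- Let p ≥ 5 be a prime and k ≥ 4 an even integer. If p−1 divides k, then the q-expansion of the normalized Eisenstein series E_k is p-integral. Moreover, if j ≥ 1 and (p−1)p^{j−1} divides k, then E_k(q) ≡ 1 mod p^j; equivalently, the rational number 2k/B_k has p-adic valuation at least j (so every coefficient (2k/B_k)·σ_{k−1}(n), n ≥ 1, has p-adic valuation at least j). -/
/-- `r ∈ ℚ` is `p`-integral: `p` does not divide its denominator. -/
def PIntegral (p : ℕ) (r : ℚ) : Prop := ¬ p ∣ r.den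

/-- The `p`-adic valuation of `r ∈ ℚ` is at least `j`: `r = p^j · s` with `s` `p`-integral. -/
def PValGe (p j : ℕ) (r : ℚ) : Prop := ∃ s : ℚ, PIntegral p s ∧ r = (p : ℚ) ^ j * s

/-- The `n`-th `q`-expansion coefficient of the normalized Eisenstein series
`E_k(q) = 1 - (2k/B_k) ∑_{n≥1} σ_{k-1}(n) qⁿ`. -/
def eisensteinCoeff (k n : ℕ) : ℚ :=
  if n = 0 then 1 else -(2 * k / bernoulli k) * ∑ d ∈ n.divisors, (d : ℚ) ^ (k - 1)

/-!
By von Staudt–Clausen, `B_k` is an integer minus the sum of `1 / q` over the primes `q` with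
`q - 1 ∣ k`. If `p - 1 ∣ k`, then `1 / p` is the only term that is not `p`-integral, so `B_k` has
`p`-adic valuation exactly `-1` (the value `exp 1` of the multiplicative `Rat.padicValuation`), and
hence `2k / B_k` has valuation one more than `2k`. All coefficients of `E_k - 1` are integral
multiples of `2k / B_k`.
-/

open WithZero

section Padic

variable {p : ℕ} [Fact p.Prime]

theorem padicValuation_natCast_le_one (n : ℕ) : Rat.padicValuation p n ≤ 1 :=
  mod_cast Int.padicValuation_le_one p n

theorem padicValuation_inv_self : Rat.padicValuation p (p : ℚ)⁻¹ = exp 1 := by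
  rw [map_inv₀, Rat.padicValuation_self, exp_neg, inv_inv]

theorem padicValuation_inv_prime_of_ne {q : ℕ} (hq : q.Prime) (hqp : q ≠ p) :
    Rat.padicValuation p (q : ℚ)⁻¹ = 1 := by
  have hpq : ¬ (p : ℤ) ∣ q := by
    rw [Int.natCast_dvd_natCast, Nat.prime_dvd_prime_iff_eq Fact.out hq]
    exact hqp.symm
  rw [map_inv₀, inv_eq_one]
  exact mod_cast Int.padicValuation_eq_one_iff.mpr hpq

theorem pIntegral_iff_padicValuation_le_one {r : ℚ} :
    PIntegral p r ↔ Rat.padicValuation p r ≤ 1 :=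
  Rat.padicValuation_le_one_iff.symm

theorem pValGe_iff_padicValuation_le {j : ℕ} {r : ℚ} :
    PValGe p j r ↔ Rat.padicValuation p r ≤ Rat.padicValuation p p ^ j := by
  have hp : (p : ℚ) ^ j ≠ 0 := pow_ne_zero j (mod_cast (Fact.out : p.Prime).ne_zero)
  have hpos : 0 < Rat.padicValuation p ((p : ℚ) ^ j) := by
    rwa [zero_lt_iff, Valuation.ne_zero_iff]
  constructor
  · rintro ⟨s, hs, rfl⟩
    rw [map_mul, map_pow]
    exact mul_le_of_le_one_right' (pIntegral_iff_padicValuation_le_one.mp hs)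
  · intro hr
    refine ⟨r / p ^ j, pIntegral_iff_padicValuation_le_one.mpr ?_, (mul_div_cancel₀ r hp).symm⟩
    rwa [map_div₀, div_le_one₀ hpos, map_pow]

theorem PValGe.pIntegral {j : ℕ} {r : ℚ} (hr : PValGe p j r) : PIntegral p r := by
  rw [pIntegral_iff_padicValuation_le_one]
  exact (pValGe_iff_padicValuation_le.mp hr).trans
    (pow_le_one' (padicValuation_natCast_le_one p) j)

end Padic

section Bernoulli

variable {p k : ℕ} [Fact p.Prime]

theorem padicValuation_bernoulli (hk : k ≠ 0) (hkeven : Even k) (hd : p - 1 ∣ k) :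
    Rat.padicValuation p (bernoulli k) = exp 1 := by
  obtain ⟨m, rfl⟩ := hkeven.two_dvd
  obtain ⟨N, hN⟩ := Bernoulli.vonStaudt_clausen m
  set primes := (Finset.range (2 * m + 2)).filter fun q ↦ q.Prime ∧ q - 1 ∣ 2 * m
  have hp_mem : p ∈ primes := by
    have hple := Nat.le_of_dvd (Nat.pos_of_ne_zero hk) hd
    exact Finset.mem_filter.mpr ⟨Finset.mem_range.mpr (by lia), Fact.out, hd⟩
  have hB : bernoulli (2 * m) = N - ∑ q ∈ primes.erase p, (q : ℚ)⁻¹ - (p : ℚ)⁻¹ := by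
    simp only [one_div, ← Finset.add_sum_erase _ _ hp_mem] at hN
    linear_combination -hN
  have hrest : Rat.padicValuation p (N - ∑ q ∈ primes.erase p, (q : ℚ)⁻¹) ≤ 1 := by
    refine Valuation.map_sub_le _ (mod_cast Int.padicValuation_le_one p N)
      (Valuation.map_sum_le _ fun q hq ↦ ?_)
    obtain ⟨hqp, hq⟩ := Finset.mem_erase.mp hq
    exact (padicValuation_inv_prime_of_ne (Finset.mem_filter.mp hq).2.1 hqp).le
  have hlt : Rat.padicValuation p (N - ∑ q ∈ primes.erase p, (q : ℚ)⁻¹) <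
      Rat.padicValuation p (p : ℚ)⁻¹ := by
    rw [padicValuation_inv_self]
    exact hrest.trans_lt (exp_lt_exp.mpr zero_lt_one)
  rw [hB, Valuation.map_sub_eq_of_lt_right _ hlt, padicValuation_inv_self]

theorem pValGe_two_mul_div_bernoulli {j : ℕ} (hk : k ≠ 0) (hkeven : Even k) (hd : p - 1 ∣ k)
    (hj : p ^ j ∣ 2 * k) : PValGe p (j + 1) (2 * k / bernoulli k) := by
  have h2k : PValGe p j (2 * k) := by
    obtain ⟨m, hm⟩ := hj
    refine ⟨m, ?_, mod_cast hm⟩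
    exact pIntegral_iff_padicValuation_le_one.mpr (padicValuation_natCast_le_one m)
  rw [pValGe_iff_padicValuation_le] at h2k ⊢
  calc Rat.padicValuation p (2 * k / bernoulli k)
      = Rat.padicValuation p (2 * k) * Rat.padicValuation p p := by
        rw [map_div₀, padicValuation_bernoulli hk hkeven hd, Rat.padicValuation_self, exp_neg,
          div_eq_mul_inv]
    _ ≤ Rat.padicValuation p p ^ j * Rat.padicValuation p p := by gcongr
    _ = Rat.padicValuation p p ^ (j + 1) := (pow_succ _ _).symm

end Bernoulli

section Eisenstein

theorem eisensteinCoeff_eq_ite_sub_mul_sigma (k n : ℕ) :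
    eisensteinCoeff k n =
      (if n = 0 then 1 else 0) - 2 * k / bernoulli k * ArithmeticFunction.sigma (k - 1) n := by
  rcases eq_or_ne n 0 with rfl | hn
  · simp [eisensteinCoeff]
  · simp [eisensteinCoeff, hn, ArithmeticFunction.sigma_apply]

variable {p k : ℕ} [Fact p.Prime]

theorem pIntegral_eisensteinCoeff (h : PIntegral p (2 * k / bernoulli k)) (n : ℕ) :
    PIntegral p (eisensteinCoeff k n) := by
  rw [pIntegral_iff_padicValuation_le_one] at h ⊢
  rw [eisensteinCoeff_eq_ite_sub_mul_sigma]
  refine Valuation.map_sub_le _ (by split_ifs <;> simp) ?_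
  rw [map_mul]
  exact mul_le_one' h (padicValuation_natCast_le_one _)

theorem pValGe_eisensteinCoeff_sub_ite {j : ℕ} (h : PValGe p j (2 * k / bernoulli k)) (n : ℕ) :
    PValGe p j (eisensteinCoeff k n - if n = 0 then 1 else 0) := by
  rw [pValGe_iff_padicValuation_le] at h ⊢
  rw [eisensteinCoeff_eq_ite_sub_mul_sigma, sub_sub_cancel_left, Valuation.map_neg, map_mul]
  exact mul_le_of_le_of_le_one h (padicValuation_natCast_le_one _)

end Eisenstein

theorem stmt2_general (p : ℕ) (hp : p.Prime) (k : ℕ) (hk : k ≠ 0) (hkeven : Even k) :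
    ((p - 1) ∣ k → ∀ n : ℕ, PIntegral p (eisensteinCoeff k n)) ∧
    (∀ j : ℕ, 1 ≤ j → (p - 1) * p ^ (j - 1) ∣ k →
      PValGe p j (2 * k / bernoulli k) ∧
      ∀ n : ℕ, PValGe p j (eisensteinCoeff k n - if n = 0 then 1 else 0)) := by
  have : Fact p.Prime := ⟨hp⟩
  refine ⟨fun hd ↦ ?_, fun j hj hd ↦ ?_⟩
  · have h : PValGe p 1 (2 * k / bernoulli k) :=
      pValGe_two_mul_div_bernoulli (j := 0) hk hkeven hd (by simp)
    exact pIntegral_eisensteinCoeff h.pIntegral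
  · obtain ⟨i, rfl⟩ := Nat.exists_eq_add_of_le' hj
    rw [Nat.add_sub_cancel] at hd
    have h : PValGe p (i + 1) (2 * k / bernoulli k) :=
      pValGe_two_mul_div_bernoulli hk hkeven (dvd_of_mul_right_dvd hd)
        (dvd_mul_of_dvd_right (dvd_of_mul_left_dvd hd) 2)
    exact ⟨h, pValGe_eisensteinCoeff_sub_ite h⟩

/-- for `p ≥ 5` prime and `k ≥ 4` even: if `(p-1) ∣ k` then the `q`-expansion
of `E_k` is `p`-integral; and if `(p-1)p^(j-1) ∣ k` (`j ≥ 1`) then `E_k(q) ≡ 1 mod p^j`,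
equivalently `ν_p(2k/B_k) ≥ j`. -/
theorem stmt2 (p : ℕ) (hp : p.Prime) (hp5 : 5 ≤ p) (k : ℕ) (hk4 : 4 ≤ k) (hkeven : Even k) :
    ((p - 1) ∣ k → ∀ n : ℕ, PIntegral p (eisensteinCoeff k n)) ∧
    (∀ j : ℕ, 1 ≤ j → (p - 1) * p ^ (j - 1) ∣ k →
      PValGe p j (2 * k / bernoulli k) ∧
      ∀ n : ℕ, PValGe p j (eisensteinCoeff k n - if n = 0 then 1 else 0)) :=
  stmt2_general p hp k (by lia) hkeven
end

section
/- Let p ≥ 5 be a prime, ℓ an integer which is a primitive root modulo p², j ≥ 1, and t ≥ 1 an integer. Set i = ν_p(ℓ^t − 1) (so i = 0 when p−1 does not divide t). For a formal power series f over ℤ/p^j, the following are equivalent: (a) (ℓ^t − 1)·f = 0 and ℓ^t·f(q^ℓ) = f(q); (b) p^i·f = 0 and f is a constant power series. -/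
/-- `ℓ` is a primitive root modulo `m`: the class of `ℓ` generates the unit group `(ZMod m)ˣ`. -/
def IsPrimRootMod (ℓ : ℤ) (m : ℕ) : Prop :=
  ∀ u : (ZMod m)ˣ, ∃ n : ℕ, (u : ZMod m) = (ℓ : ZMod m) ^ n

/-!
If `ℓ > 1` and `c * f(q^ℓ) = f(q)`, then comparing coefficients at `n ≠ 0` expresses `a n` through
`a (n / ℓ)`, whose index is again nonzero and strictly smaller, or gives `a n = 0` outright. By
descent `f` is constant, and the equation reduces to `c * a 0 = a 0`. For `c = ℓ ^ t` this last
condition says that `ℓ ^ t - 1` kills `a 0`. Finally `ℓ ^ t - 1` is `p ^ i` times an integer prime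
to `p`, hence a unit multiple of `p ^ i` in the coefficients, so both kill the same elements.
-/

/-- A ring is `p`-local if every integer prime to `p` is invertible in it; equivalently, for `p`
prime, if it is an algebra over `ℤ` localized at `(p)`. This is the property of `ℤ/p^j` under which
a nonzero integer annihilates the same elements as its `p`-part. -/
def IsPLocalRing (p : ℕ) (R : Type*) [Ring R] : Prop :=
  ∀ u : ℤ, IsCoprime (p : ℤ) u → IsUnit (u : R)

theorem isPLocalRing_zmod_pow (p j : ℕ) : IsPLocalRing p (ZMod (p ^ j)) := by
  intro u hu
  rw [ZMod.coe_int_isUnit_iff_isCoprime, Nat.cast_pow]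
  exact hu.pow_left

theorem IsPLocalRing.intCast_mul_eq_zero_iff {p : ℕ} {R : Type*} [Ring R]
    (hR : IsPLocalRing p R) (hp : p.Prime) {m : ℤ} (hm : m ≠ 0) (x : R) :
    (m : R) * x = 0 ↔ (p : R) ^ padicValInt p m * x = 0 := by
  have hfin : FiniteMultiplicity (p : ℤ) m :=
    Int.finiteMultiplicity_iff.mpr ⟨by simpa using hp.ne_one, hm⟩
  obtain ⟨u, hmu, hpu⟩ := hfin.exists_eq_pow_mul_and_not_dvd
  rw [← padicValInt.of_ne_one_ne_zero hp.ne_one hm] at hmu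
  have hu : IsUnit (u : R) :=
    hR u ((Nat.prime_iff_prime_int.mp hp).coprime_iff_not_dvd.mpr hpu)
  have hcast : (m : R) = u * (p : R) ^ padicValInt p m := by
    rw [mul_comm] at hmu
    exact_mod_cast congrArg (Int.cast : ℤ → R) hmu
  rw [hcast, mul_assoc, hu.mul_right_eq_zero]

/-- The coefficient sequence of `f(q^ℓ)`, where `a` is the coefficient sequence of `f(q)`. For
`ℓ = 0` there is no such series, and the value is `a 0` followed by zeros. -/
def dilate {R : Type*} [Zero R] (ℓ : ℕ) (a : ℕ → R) (n : ℕ) : R :=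
  if ℓ ∣ n then a (n / ℓ) else 0

theorem dilate_apply_zero {R : Type*} [Zero R] (ℓ : ℕ) (a : ℕ → R) : dilate ℓ a 0 = a 0 := by
  simp [dilate]

theorem dilate_eq_zero_of_forall_lt {R : Type*} [Zero R] {ℓ : ℕ} (hℓ : 1 < ℓ) {a : ℕ → R}
    {n : ℕ} (hn : n ≠ 0) (ha : ∀ m < n, m ≠ 0 → a m = 0) : dilate ℓ a n = 0 := by
  rw [dilate]
  split_ifs with hdvd
  · exact ha (n / ℓ) (Nat.div_lt_self (Nat.pos_of_ne_zero hn) hℓ)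
      ((Nat.div_ne_zero_iff_of_dvd hdvd).mpr ⟨hn, by lia⟩)
  · rfl

theorem forall_eq_mul_dilate_iff {R : Type*} [MulZeroClass R] {ℓ : ℕ} (hℓ : 1 < ℓ) (c : R)
    (a : ℕ → R) :
    (∀ n, a n = c * dilate ℓ a n) ↔ c * a 0 = a 0 ∧ ∀ n, n ≠ 0 → a n = 0 := by
  constructor
  · intro ha
    refine ⟨by simpa only [dilate_apply_zero] using (ha 0).symm, fun n hn ↦ ?_⟩
    induction n using Nat.strong_induction_on with
    | _ n ih => rw [ha n, dilate_eq_zero_of_forall_lt hℓ hn ih, mul_zero]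
  · rintro ⟨hfix, hconst⟩ n
    rcases eq_or_ne n 0 with rfl | hn
    · rw [dilate_apply_zero, hfix]
    · rw [hconst n hn, dilate_eq_zero_of_forall_lt hℓ hn fun m _ ↦ hconst m, mul_zero]

theorem IsPrimRootMod.one_lt {ℓ m : ℕ} (hm : 2 < m) (hℓ : IsPrimRootMod (ℓ : ℤ) m) : 1 < ℓ := by
  have : Fact (2 < m) := ⟨hm⟩
  have : Fact (1 < m) := ⟨by lia⟩
  obtain ⟨n, hn⟩ := hℓ (-1)
  by_contra! hle
  have hpow : ℓ ^ n = 0 ∨ ℓ ^ n = 1 := Nat.le_one_iff_eq_zero_or_eq_one.mp (pow_le_one' hle n)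
  have hneg : (-1 : ZMod m) = (ℓ ^ n : ℕ) := by simpa using hn
  rcases hpow with h | h
  · simp [h] at hneg
  · exact ZMod.neg_one_ne_one (by simpa [h] using hneg)

theorem stmt8_general {p : ℕ} (hp : p.Prime) {R : Type*} [Ring R] (hR : IsPLocalRing p R)
    {ℓ : ℕ} (hℓ : 1 < ℓ) {t : ℕ} (ht : t ≠ 0) (a : ℕ → R) :
    ((∀ n : ℕ, ((ℓ : R) ^ t - 1) * a n = 0) ∧
      (∀ n : ℕ, a n = (ℓ : R) ^ t * dilate ℓ a n)) ↔
    ((∀ n : ℕ, (p : R) ^ padicValInt p ((ℓ : ℤ) ^ t - 1) * a n = 0) ∧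
      (∀ n : ℕ, n ≠ 0 → a n = 0)) := by
  have hne : (ℓ : ℤ) ^ t - 1 ≠ 0 :=
    (sub_pos.mpr (one_lt_pow₀ (by exact_mod_cast hℓ) ht)).ne'
  have hann (n : ℕ) : ((ℓ : R) ^ t - 1) * a n = 0 ↔
      (p : R) ^ padicValInt p ((ℓ : ℤ) ^ t - 1) * a n = 0 := by
    simpa using hR.intCast_mul_eq_zero_iff hp hne (a n)
  simp only [← hann]
  refine and_congr_right fun hkill ↦ ?_
  have hfix : (ℓ : R) ^ t * a 0 = a 0 := by
    simpa only [sub_mul, one_mul, sub_eq_zero] using hkill 0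
  rw [forall_eq_mul_dilate_iff hℓ, and_iff_right hfix]

/-- for `p ≥ 5` prime, `ℓ` a primitive root mod `p²`, `j ≥ 1`, `t ≥ 1` and
`i = ν_p(ℓ^t - 1)`, a formal power series `f = ∑ a_n qⁿ` over `ℤ/p^j` satisfies
`(ℓ^t - 1)·f = 0` and `ℓ^t·f(q^ℓ) = f(q)` if and only if `p^i·f = 0` and `f` is constant. -/
theorem stmt8 (p : ℕ) (hp : p.Prime) (hp5 : 5 ≤ p)
    (ℓ : ℕ) (hgen : IsPrimRootMod (ℓ : ℤ) (p ^ 2))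
    (j : ℕ) (hj : 1 ≤ j) (t : ℕ) (ht : 1 ≤ t)
    (i : ℕ) (hi : i = padicValInt p ((ℓ : ℤ) ^ t - 1))
    (a : ℕ → ZMod (p ^ j)) :
    ((∀ n : ℕ, ((ℓ : ZMod (p ^ j)) ^ t - 1) * a n = 0) ∧
      (∀ n : ℕ, a n = if ℓ ∣ n then (ℓ : ZMod (p ^ j)) ^ t * a (n / ℓ) else 0)) ↔
    ((∀ n : ℕ, (p : ZMod (p ^ j)) ^ i * a n = 0) ∧ (∀ n : ℕ, n ≠ 0 → a n = 0)) := by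
  have hp_sq : 2 < p ^ 2 := by nlinarith
  subst hi
  simpa only [dilate, mul_ite, mul_zero] using
    stmt8_general hp (isPLocalRing_zmod_pow p j) (hgen.one_lt hp_sq) (Nat.ne_of_gt ht) a
end

section
/- Let p ≥ 5 be a prime, i ≥ 1 an integer, and t = (p−1)i. Then the p-adic valuation of the rational number B_t/t equals −(ν_p(i) + 1); equivalently, the exact power of p dividing the denominator of B_t/t is p^{ν_p(i)+1}. (In particular ν_p(B_t) = −1 whenever (p−1) divides t.) -/
/-!
For even `t > 0`, the von Staudt–Clausen theorem says that `B_t` plus the sum of `1 / q` over all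
primes `q` with `q - 1 ∣ t` is an integer. If `p` is one of these primes, the terms with `q ≠ p` are
`p`-integral, hence `B_t ≡ -1 / p` modulo `p`-integral rationals and `ν_p(B_t) = -1`. Since `p - 1`
is prime to `p`, dividing by `t = (p - 1) i` lowers the valuation by `ν_p(i)`.
-/

section PadicNorm

variable {p : ℕ} [Fact p.Prime]

theorem padicValRat_eq_of_padicNorm_eq {x y : ℚ} (h : padicNorm p x = padicNorm p y) :
    padicValRat p x = padicValRat p y := by
  have hp : 1 < (p : ℚ) := mod_cast (Fact.out : p.Prime).one_lt
  rcases eq_or_ne x 0 with rfl | hx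
  · rw [padicNorm.zero_of_padicNorm_eq_zero (h.symm.trans padicNorm.zero)]
  · have hy : y ≠ 0 := by
      rintro rfl
      exact hx (padicNorm.zero_of_padicNorm_eq_zero (h.trans padicNorm.zero))
    rw [padicNorm.eq_zpow_of_nonzero hx, padicNorm.eq_zpow_of_nonzero hy] at h
    exact neg_injective (zpow_right_injective₀ (zero_lt_one.trans hp) hp.ne' h)

theorem padicNorm_eq_of_padicNorm_add_lt_right {x y : ℚ}
    (h : padicNorm p (x + y) < padicNorm p y) : padicNorm p x = padicNorm p y := by
  by_contra hne
  exact h.not_ge (padicNorm.add_eq_max_of_ne hne ▸ le_max_right _ _)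

theorem padicValRat_eq_neg_one_of_padicNorm_add_inv_le_one {x : ℚ}
    (h : padicNorm p (x + (p : ℚ)⁻¹) ≤ 1) : padicValRat p x = -1 := by
  have hp : p.Prime := Fact.out
  have norm_inv : padicNorm p (p : ℚ)⁻¹ = p := by
    rw [← one_div, padicNorm.div, padicNorm.one, padicNorm.padicNorm_p hp.one_lt, one_div, inv_inv]
  have hlt : padicNorm p (x + (p : ℚ)⁻¹) < padicNorm p (p : ℚ)⁻¹ := by
    rw [norm_inv]
    exact h.trans_lt (mod_cast hp.one_lt)
  rw [padicValRat_eq_of_padicNorm_eq (padicNorm_eq_of_padicNorm_add_lt_right hlt),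
    padicValRat.inv, padicValRat.self hp.one_lt]

theorem padicNorm_sum_one_div_natCast_le_one {s : Finset ℕ} (hs : ∀ q ∈ s, ¬p ∣ q) :
    padicNorm p (∑ q ∈ s, (1 : ℚ) / q) ≤ 1 := by
  refine padicNorm.sum_le' (fun q hq ↦ ?_) zero_le_one
  rw [padicNorm.div, padicNorm.one, (padicNorm.nat_eq_one_iff q).2 (hs q hq), div_one]

end PadicNorm

theorem padicValNat_sub_one_mul {p : ℕ} [Fact p.Prime] (i : ℕ) :
    padicValNat p ((p - 1) * i) = padicValNat p i := by
  have hp : 1 < p := (Fact.out : p.Prime).one_lt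
  rcases eq_or_ne i 0 with rfl | hi
  · rw [mul_zero]
  · have not_dvd : ¬p ∣ p - 1 := Nat.not_dvd_of_pos_of_lt (by lia) (by lia)
    rw [padicValNat.mul (by lia) hi, padicValNat.eq_zero_of_not_dvd not_dvd, zero_add]

section Bernoulli

variable {p : ℕ} [Fact p.Prime] {t : ℕ}

theorem padicNorm_bernoulli_add_inv_le_one (ht : 0 < t) (heven : Even t) (hdvd : p - 1 ∣ t) :
    padicNorm p (bernoulli t + (p : ℚ)⁻¹) ≤ 1 := by
  have hp : p.Prime := Fact.out
  obtain ⟨k, rfl⟩ := heven.two_dvd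
  obtain ⟨n, hn⟩ := Bernoulli.vonStaudt_clausen k
  set primes := {q ∈ Finset.range (2 * k + 2) | q.Prime ∧ q - 1 ∣ 2 * k}
  have p_mem : p ∈ primes := by
    have : p - 1 ≤ 2 * k := Nat.le_of_dvd ht hdvd
    exact Finset.mem_filter.2 ⟨Finset.mem_range.2 (by lia), hp, hdvd⟩
  have not_dvd : ∀ q ∈ primes.erase p, ¬p ∣ q := by
    intro q hq hpq
    obtain ⟨hqp, hq⟩ := Finset.mem_erase.1 hq
    exact hqp ((Nat.prime_dvd_prime_iff_eq hp (Finset.mem_filter.1 hq).2.1).1 hpq).symm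
  have bernoulli_add_inv :
      bernoulli (2 * k) + (p : ℚ)⁻¹ = n - ∑ q ∈ primes.erase p, (1 : ℚ) / q := by
    rw [← Finset.add_sum_erase _ _ p_mem, one_div] at hn
    linarith
  rw [bernoulli_add_inv]
  exact padicNorm.sub.trans
    (max_le (padicNorm.of_int n) (padicNorm_sum_one_div_natCast_le_one not_dvd))

theorem padicValRat_bernoulli (ht : 0 < t) (heven : Even t) (hdvd : p - 1 ∣ t) :
    padicValRat p (bernoulli t) = -1 :=
  padicValRat_eq_neg_one_of_padicNorm_add_inv_le_one
    (padicNorm_bernoulli_add_inv_le_one ht heven hdvd)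

theorem padicValRat_bernoulli_div_self (ht : 0 < t) (heven : Even t) (hdvd : p - 1 ∣ t) :
    padicValRat p (bernoulli t / t) = -((padicValNat p t : ℤ) + 1) := by
  have hval : padicValRat p (bernoulli t) = -1 := padicValRat_bernoulli ht heven hdvd
  have hne : bernoulli t ≠ 0 := by
    intro h
    simp [h] at hval
  rw [padicValRat.div hne (mod_cast ht.ne'), hval, padicValRat.of_nat]
  ring

end Bernoulli

theorem stmt11_general (p : ℕ) (hp : p.Prime) :
    (∀ i : ℕ, 1 ≤ i → Even ((p - 1) * i) →
      padicValRat p (bernoulli ((p - 1) * i) / (((p - 1) * i : ℕ) : ℚ)) =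
        -((padicValNat p i : ℤ) + 1)) ∧
    (∀ t : ℕ, 0 < t → Even t → (p - 1) ∣ t → padicValRat p (bernoulli t) = -1) := by
  have : Fact p.Prime := ⟨hp⟩
  refine ⟨fun i hi heven ↦ ?_, fun t ↦ padicValRat_bernoulli⟩
  have hpos : 0 < (p - 1) * i := Nat.mul_pos (Nat.sub_pos_of_lt hp.one_lt) hi
  rw [padicValRat_bernoulli_div_self hpos heven (Nat.dvd_mul_right _ _), padicValNat_sub_one_mul]

/-- for `p ≥ 5` prime, `i ≥ 1` and `t = (p-1)i`, the `p`-adic valuation of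
`B_t / t` is `-(ν_p(i) + 1)`; in particular `ν_p(B_t) = -1` whenever `(p-1) ∣ t` (`t > 0`). -/
theorem stmt11 (p : ℕ) (hp : p.Prime) (hp5 : 5 ≤ p) :
    (∀ i : ℕ, 1 ≤ i →
      padicValRat p (bernoulli ((p - 1) * i) / (((p - 1) * i : ℕ) : ℚ)) =
        -((padicValNat p i : ℤ) + 1)) ∧
    (∀ t : ℕ, 0 < t → (p - 1) ∣ t → padicValRat p (bernoulli t) = -1) := by
  have heven : Even (p - 1) := hp.even_sub_one (by lia)
  exact ⟨fun i hi ↦ (stmt11_general p hp).1 i hi (heven.mul_right i),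
    fun t ht hdvd ↦ (stmt11_general p hp).2 t ht (heven.trans_dvd hdvd) hdvd⟩
end
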